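/- arXiv:2502.13654 — 2 statements merged into one kernel-verified Lean document; each statement's English description precedes it below -/
import Mathlib

section
/- Given a graph G = (V, E), the collection of subsets F ⊆ V such that the induced subgraph G[F] has a perfect matching forms the feasible sets of a delta-matroid (the matching delta-matroid of G). -/
open scoped symmDiff

/-- A (finite) delta-matroid given by its family of feasible sets:
a nonempty family satisfying the symmetric exchange axiom. -/
def IsDeltaMatroid {α : Type*} [DecidableEq α] (𝓕 : Set (Finset α)) : Prop :=
  𝓕.Nonempty ∧
    ∀ A ∈ 𝓕, ∀ B ∈ 𝓕, ∀ x ∈ A ∆ B, ∃ y ∈ A ∆ B, A ∆ ({x, y} : Finset α) ∈ 𝓕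

/-- `f` is an involution encoding a perfect matching of `G[A]`. -/
def GoodInv {V : Type*} (G : SimpleGraph V) (A : Finset V) (f : V → V) : Prop :=
  (∀ v, f (f v) = v) ∧ (∀ v ∈ A, G.Adj v (f v)) ∧ ∀ v, v ∉ A → f v = v

lemma GoodInv.mem {V : Type*} {G : SimpleGraph V} {A : Finset V} {f : V → V}
    (h : GoodInv G A f) {v : V} (hv : v ∈ A) : f v ∈ A := by
  by_contra hc
  have h1 := h.2.2 _ hc
  rw [h.1] at h1
  have h2 := h.2.1 v hv
  rw [← h1] at h2
  exact G.irrefl h2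

lemma goodInv_iff {V : Type*} [DecidableEq V] (G : SimpleGraph V) (A : Finset V) :
    (∃ M : (G.induce (↑A : Set V)).Subgraph, M.IsPerfectMatching) ↔ ∃ f, GoodInv G A f := by
  constructor
  · rintro ⟨M, hM⟩
    rw [SimpleGraph.Subgraph.isPerfectMatching_iff] at hM
    choose g hg hg' using hM
    refine ⟨fun v => if h : v ∈ A then (g ⟨v, h⟩ : V) else v, ?_, ?_, ?_⟩
    · intro v
      by_cases h : v ∈ A
      · have h2 : ((g ⟨v, h⟩ : (↑A : Set V)) : V) ∈ A := (g ⟨v, h⟩).2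
        have h3 := hg' (g ⟨v, h⟩) ⟨v, h⟩ (hg ⟨v, h⟩).symm
        simp only [h, h2, dif_pos]
        exact (congrArg Subtype.val h3).symm
      · simp [h]
    · intro v h
      simp only [h, dif_pos]
      exact (hg ⟨v, h⟩).adj_sub
    · intro v h
      simp [h]
  · rintro ⟨f, hf⟩
    refine ⟨{ verts := Set.univ, Adj := fun u v => f u = v, adj_sub := ?_,
              edge_vert := fun _ => trivial, symm := ?_ }, ?_⟩
    · rintro ⟨u, hu⟩ ⟨v, hv⟩ h
      have := hf.2.1 u hu
      simp only at h
      rw [h] at this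
      exact this
    · refine ⟨?_⟩
      intro u v h
      rw [← h, hf.1]
    · rw [SimpleGraph.Subgraph.isPerfectMatching_iff]
      rintro ⟨v, hv⟩
      refine ⟨⟨f v, hf.mem hv⟩, rfl, ?_⟩
      rintro ⟨w, hw⟩ h
      exact Subtype.ext (Eq.symm h)

/-- Combining an exchange step with the next one. -/
lemma exch_step {V : Type*} [DecidableEq V] (P : Finset V → Prop) (A B : Finset V) (x z : V)
    (hx : x ∈ A ∆ B) (hzA : z ∈ A) (hzB : z ∈ B)
    (h : ∃ y ∈ (A ∆ {x, z}) ∆ B, P ((A ∆ {x, z}) ∆ {z, y})) :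
    ∃ y ∈ A ∆ B, P (A ∆ {x, y}) := by
  obtain ⟨y, hy, hP⟩ := h
  have hxz : x ≠ z := by
    rintro rfl
    simp [Finset.mem_symmDiff, hzA, hzB] at hx
  by_cases hyz : y = z
  · subst hyz
    refine ⟨x, hx, ?_⟩
    convert hP using 1
    ext v
    simp only [Finset.mem_symmDiff, Finset.mem_insert, Finset.mem_singleton] at *
    grind
  · refine ⟨y, ?_, ?_⟩
    · simp only [Finset.mem_symmDiff, Finset.mem_insert, Finset.mem_singleton] at *
      grind
    · convert hP using 1
      ext v
      simp only [Finset.mem_symmDiff, Finset.mem_insert, Finset.mem_singleton] at *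
      grind

lemma exch_add {V : Type*} [Fintype V] [DecidableEq V] (G : SimpleGraph V) (B : Finset V)
    (g : V → V) (hg : GoodInv G B g) (n : ℕ) : ∀ (A : Finset V) (f : V → V), GoodInv G A f →
    (Finset.univ.filter (fun v => f v ≠ g v)).card = n → ∀ x ∈ B, x ∉ A →
    ∃ y ∈ A ∆ B, ∃ f', GoodInv G (A ∆ {x, y}) f' := by
  induction n using Nat.strong_induction_on with
  | _ n ih =>
  intro A f hf hn x hxB hxA
  have hadj := hg.2.1 x hxB
  have hne : x ≠ g x := hadj.ne
  have hyB := hg.mem hxB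
  have hgg := hg.1 x
  have hxD : x ∈ A ∆ B := by simp [Finset.mem_symmDiff, hxB, hxA]
  generalize g x = y at *
  obtain ⟨f1, f2, f3⟩ := id hf
  by_cases hyA : y ∈ A
  · have hzA := hf.mem hyA
    have hzy := (f2 y hyA).ne
    have hfz := f1 y
    obtain ⟨z, hz⟩ : ∃ z, z = f y := ⟨_, rfl⟩
    rw [← hz] at hzA hzy hfz
    have hzx : z ≠ x := by rintro rfl; exact hxA hzA
    set f' : V → V := fun v => if v = x then y else if v = y then x else
      if v = z then z else f v with hf'
    have hgood : GoodInv G (A ∆ {x, z}) f' := by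
      refine ⟨?_, ?_, ?_⟩
      · intro v
        grind
      · intro v hv
        simp only [Finset.mem_symmDiff, Finset.mem_insert, Finset.mem_singleton] at hv
        have := hadj.symm
        grind
      · intro v hv
        simp only [Finset.mem_symmDiff, Finset.mem_insert, Finset.mem_singleton] at hv
        grind
    by_cases hzB : z ∈ B
    · apply exch_step (fun A => ∃ f, GoodInv G A f) A B x z hxD hzA hzB
      refine ih _ ?_ _ f' hgood rfl z hzB ?_
      · rw [← hn]
        apply Finset.card_lt_card
        have hgx : g x = y := by rw [← hgg, hg.1]
        rw [Finset.ssubset_iff_of_subset]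
        · refine ⟨x, ?_, ?_⟩ <;> simp only [Finset.mem_filter, Finset.mem_univ, true_and] <;> grind
        · intro v
          simp only [Finset.mem_filter, Finset.mem_univ, true_and]
          have := hg.1
          grind
      · simp [Finset.mem_symmDiff, hzA]
    · exact ⟨z, by simp [Finset.mem_symmDiff, hzA, hzB], f', hgood⟩
  · refine ⟨y, by simp [Finset.mem_symmDiff, hyA, hyB],
      fun v => if v = x then y else if v = y then x else f v, ?_, ?_, ?_⟩
    · intro v
      grind
    · intro v hv
      simp only [Finset.mem_symmDiff, Finset.mem_insert, Finset.mem_singleton] at hv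
      have := hadj.symm
      grind
    · intro v hv
      simp only [Finset.mem_symmDiff, Finset.mem_insert, Finset.mem_singleton] at hv
      grind

/-- The sets of vertices inducing a subgraph with a perfect matching form the
feasible sets of a delta-matroid (the matching delta-matroid of `G`). -/
theorem matching_isDeltaMatroid {V : Type*} [Fintype V] [DecidableEq V]
    (G : SimpleGraph V) :
    IsDeltaMatroid {F : Finset V |
      ∃ M : (G.induce (↑F : Set V)).Subgraph, M.IsPerfectMatching} := by
  simp only [goodInv_iff]
  refine ⟨⟨∅, id, by simp [GoodInv]⟩, ?_⟩
  rintro A ⟨f, hf⟩ B ⟨g, hg⟩ x hx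
  simp only [Set.mem_setOf_eq]
  by_cases hxA : x ∈ A
  · have hxB : x ∉ B := by
      intro h
      simp [Finset.mem_symmDiff, h, hxA] at hx
    obtain ⟨f1, f2, f3⟩ := id hf
    have hzA := hf.mem hxA
    have hfz := f1 x
    have hxz := (f2 x hxA).ne
    obtain ⟨z, hz⟩ : ∃ z, z = f x := ⟨_, rfl⟩
    rw [← hz] at hzA hfz hxz
    have hgood : GoodInv G (A ∆ {x, z}) (fun v => if v = x then x else if v = z then z else f v) := by
      refine ⟨?_, ?_, ?_⟩
      · intro v
        grind
      · intro v hv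
        simp only [Finset.mem_symmDiff, Finset.mem_insert, Finset.mem_singleton] at hv
        grind
      · intro v hv
        simp only [Finset.mem_symmDiff, Finset.mem_insert, Finset.mem_singleton] at hv
        grind
    by_cases hzB : z ∈ B
    · apply exch_step (fun A => ∃ f, GoodInv G A f) A B x z hx hzA hzB
      exact exch_add G B g hg _ _ _ hgood rfl z hzB (by simp [Finset.mem_symmDiff, hzA])
    · exact ⟨z, by simp [Finset.mem_symmDiff, hzA, hzB], _, hgood⟩
  · have hxB : x ∈ B := by
      by_contra h
      simp [Finset.mem_symmDiff, h, hxA] at hx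
    exact exch_add G B g hg _ A f hf rfl x hxB hxA
end

section
/- Pfaffian of a sum: for two skew-symmetric matrices A₁ and A₂, both indexed by a finite linearly ordered set V, Pf(A₁ + A₂) = Σ_{U ⊆ V} σ_U · Pf A₁[U] · Pf A₂[V \ U], where σ_U ∈ {1, -1} is the sign of the permutation sending 1, ..., |V| to the increasing enumeration of U followed by the increasing enumeration of V \ U, and Pf of an empty matrix is 1. -/
open Matrix

open Matrix

/-- The Pfaffian of an `n × n` matrix (intended for skew-symmetric matrices),
defined as the signed sum over perfect matchings of the index set: each matching
is encoded by the permutation listing its pairs `(a₁,b₁),(a₂,b₂),…` with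
`aᵢ < bᵢ` and `a₁ < a₂ < ⋯`. For odd `n` the Pfaffian is `0`. -/
noncomputable def pfaffian {n : ℕ} {K : Type*} [Field K]
    (A : Matrix (Fin n) (Fin n) K) : K :=
  if Even n then
    ∑ σ ∈ Finset.univ.filter (fun σ : Equiv.Perm (Fin n) =>
        (∀ i j : Fin n, (i : ℕ) % 2 = 0 → (j : ℕ) = (i : ℕ) + 1 → σ i < σ j) ∧
        (∀ i j : Fin n, (i : ℕ) % 2 = 0 → (j : ℕ) % 2 = 0 → i < j → σ i < σ j)),
      ((Equiv.Perm.sign σ : ℤ) : K) *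
        ∏ i : Fin n,
          (if h : (i : ℕ) % 2 = 0 ∧ (i : ℕ) + 1 < n then
            A (σ i) (σ ⟨(i : ℕ) + 1, h.2⟩) else 1)
  else 0

/-- The Pfaffian of the principal submatrix `A[U]`, read off in the order
induced by the linear order on the index type. -/
noncomputable def pfSub {ι K : Type*} [LinearOrder ι] [Field K]
    (A : Matrix ι ι K) (U : Finset ι) : K :=
  pfaffian (A.submatrix (fun i : Fin U.card => ((U.orderIsoOfFin rfl) i : ι))
    (fun j : Fin U.card => ((U.orderIsoOfFin rfl) j : ι)))

/-- The permutation of `Fin N` sending `1, …, N` to the increasing enumeration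
of `U` followed by the increasing enumeration of its complement. -/
noncomputable def splitPerm {N : ℕ} (U : Finset (Fin N)) : Equiv.Perm (Fin N) :=
  (((finCongr (by
        rw [Finset.card_add_card_compl, Fintype.card_fin] :
          U.card + Uᶜ.card = N).symm).trans
      finSumFinEquiv.symm).trans
    (Equiv.sumCongr (U.orderIsoOfFin rfl).toEquiv
      (Uᶜ.orderIsoOfFin rfl).toEquiv)).trans
    ((Equiv.sumCongr (Equiv.refl _)
        (Equiv.subtypeEquivRight (fun x => Finset.mem_compl))).trans
      (Equiv.sumCompl (· ∈ U)))

section Helpers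

theorem aux_sign_prod {n : ℕ} {K : Type*} [Field K] (σ : Equiv.Perm (Fin n)) :
    ((Equiv.Perm.sign σ : ℤ) : K) =
      ∏ i, ∏ j, if i < j ∧ σ j < σ i then (-1 : K) else 1 := by
  rw [Equiv.Perm.sign_eq_prod_prod_Ioi]
  push_cast
  refine Finset.prod_congr rfl fun i _ => ?_
  rw [← Finset.prod_subset (Finset.subset_univ (Finset.Ioi i))]
  · refine Finset.prod_congr rfl fun j hj => ?_
    have hij : i < j := Finset.mem_Ioi.1 hj
    have hne : σ i ≠ σ j := fun h => hij.ne (σ.injective h)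
    by_cases h : σ i < σ j
    · simp [h, not_lt.2 h.le]
    · have h' : σ j < σ i := lt_of_le_of_ne (not_lt.1 h) hne.symm
      simp [hij, h, h']
  · intro j _ hj
    have : ¬ i < j := fun h => hj (Finset.mem_Ioi.2 h)
    simp [this]

/-- first element of the `p`-th pair -/
def evF {m : ℕ} (p : Fin m) : Fin (2 * m) := ⟨2 * p, by omega⟩
/-- second element of the `p`-th pair -/
def odF {m : ℕ} (p : Fin m) : Fin (2 * m) := ⟨2 * p + 1, by omega⟩

theorem ev_od_cases {m : ℕ} (i : Fin (2 * m)) : (∃ p, i = evF p) ∨ (∃ p, i = odF p) := by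
  have := i.2
  rcases Nat.mod_two_eq_zero_or_one i with h | h
  · exact Or.inl ⟨⟨i / 2, by omega⟩, Fin.ext (by simp [evF]; omega)⟩
  · exact Or.inr ⟨⟨i / 2, by omega⟩, Fin.ext (by simp [odF]; omega)⟩

theorem evF_inj {m : ℕ} {p q : Fin m} : evF p = evF q ↔ p = q := by
  simp [evF, Fin.ext_iff]
theorem odF_inj {m : ℕ} {p q : Fin m} : odF p = odF q ↔ p = q := by
  simp [odF, Fin.ext_iff]
theorem evF_ne_odF {m : ℕ} {p q : Fin m} : evF p ≠ odF q := by
  simp [odF, evF, Fin.ext_iff]; omega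
theorem evF_lt {m : ℕ} {p q : Fin m} : evF p < evF q ↔ p < q := by
  rw [Fin.lt_def, Fin.lt_def]; simp only [evF]; omega
theorem odF_lt {m : ℕ} {p q : Fin m} : odF p < odF q ↔ p < q := by
  rw [Fin.lt_def, Fin.lt_def]; simp only [odF]; omega
theorem evF_lt_odF {m : ℕ} {p q : Fin m} : evF p < odF q ↔ p ≤ q := by
  rw [Fin.lt_def, Fin.le_def]; simp only [odF, evF]; omega
theorem odF_lt_evF {m : ℕ} {p q : Fin m} : odF p < evF q ↔ p < q := by
  rw [Fin.lt_def, Fin.lt_def]; simp only [odF, evF]; omega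

theorem prod_ev_od {m : ℕ} {K : Type*} [CommMonoid K] (g : Fin (2 * m) → K) :
    ∏ i, g i = ∏ p : Fin m, g (evF p) * g (odF p) := by
  classical
  have hu : (Finset.univ : Finset (Fin (2 * m))) =
      Finset.univ.image evF ∪ Finset.univ.image odF := by
    ext i
    rcases ev_od_cases i with ⟨p, rfl⟩ | ⟨p, rfl⟩ <;> simp
  rw [hu, Finset.prod_union, Finset.prod_image, Finset.prod_image, Finset.prod_mul_distrib]
  · intro p _ q _ h; exact odF_inj.1 h
  · intro p _ q _ h; exact evF_inj.1 h
  · rw [Finset.disjoint_left]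
    intro i hi hj
    obtain ⟨p, _, rfl⟩ := Finset.mem_image.1 hi
    obtain ⟨q, _, h⟩ := Finset.mem_image.1 hj
    exact evF_ne_odF h.symm

set_option linter.unusedSectionVars false
variable {ι : Type*} [LinearOrder ι] [Fintype ι] {K : Type*} [Field K]

/-- matchings of `U`, encoded as involutions moving exactly `U` -/
def mtch (U : Finset ι) : Finset (ι → ι) :=
  Finset.univ.filter fun f => (∀ a, f (f a) = a) ∧ ∀ a, f a ≠ a ↔ a ∈ U

/-- smaller ends -/
def lft (f : ι → ι) : Finset ι := Finset.univ.filter fun a => a < f a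

theorem mem_mtch {U : Finset ι} {f : ι → ι} :
    f ∈ mtch U ↔ (∀ a, f (f a) = a) ∧ ∀ a, f a ≠ a ↔ a ∈ U := by simp [mtch]

theorem mem_lft {f : ι → ι} {a : ι} : a ∈ lft f ↔ a < f a := by simp [lft]

/-- crossing sign -/
def csg (K : Type*) [Field K] (f : ι → ι) : K :=
  ∏ a ∈ lft f, ∏ c ∈ lft f, if a < c ∧ c < f a ∧ f a < f c then (-1 : K) else 1

theorem mtch_union {U : Finset ι} {f : ι → ι} (hf : f ∈ mtch U) :
    U = lft f ∪ (lft f).image f ∧ Disjoint (lft f) ((lft f).image f) := by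
  rw [mem_mtch] at hf
  obtain ⟨h1, h2⟩ := hf
  constructor
  · ext a
    simp only [Finset.mem_union, Finset.mem_image, mem_lft]
    rw [← h2]
    constructor
    · intro h
      rcases lt_or_gt_of_ne h with h | h
      · right; exact ⟨f a, by rw [h1]; exact h, h1 a⟩
      · left; exact h
    · rintro (h | ⟨b, hb, rfl⟩)
      · exact h.ne'
      · rw [h1]; exact hb.ne
  · rw [Finset.disjoint_left]
    intro a ha hb
    obtain ⟨b, hb', rfl⟩ := Finset.mem_image.1 hb
    rw [mem_lft] at ha hb'
    rw [h1] at ha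
    exact lt_asymm ha hb'

theorem mtch_inj {U : Finset ι} {f : ι → ι} (hf : f ∈ mtch U) : Function.Injective f := by
  rw [mem_mtch] at hf
  exact Function.LeftInverse.injective hf.1

theorem mtch_card {U : Finset ι} {f : ι → ι} (hf : f ∈ mtch U) :
    U.card = 2 * (lft f).card := by
  have h := mtch_union hf
  rw [h.1, Finset.card_union_of_disjoint h.2, Finset.card_image_of_injective _ (mtch_inj hf)]
  ring

theorem mtch_prod {U : Finset ι} {f : ι → ι} (hf : f ∈ mtch U) (g : ι → K) :
    ∏ u ∈ U, g u = ∏ a ∈ lft f, g a * g (f a) := by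
  have h := mtch_union hf
  rw [h.1, Finset.prod_union h.2, Finset.prod_image, Finset.prod_mul_distrib]
  exact fun a _ b _ h => mtch_inj hf h

/-- the pair partner -/
def flp {m : ℕ} (i : Fin (2 * m)) : Fin (2 * m) :=
  if h : (i : ℕ) % 2 = 0 then ⟨i + 1, by omega⟩ else ⟨i - 1, by omega⟩

theorem flp_ev {m : ℕ} (p : Fin m) : flp (evF p) = odF p := by
  simp [flp, evF, odF]
theorem flp_od {m : ℕ} (p : Fin m) : flp (odF p) = evF p := by
  simp [flp, evF, odF]

open Classical in
/-- the involution attached to a listing -/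
noncomputable def mkf {m : ℕ} (g : Fin (2 * m) → ι) (x : ι) : ι :=
  if h : ∃ i, g i = x then g (flp h.choose) else x

theorem mkf_apply {m : ℕ} {g : Fin (2 * m) → ι} (hg : Function.Injective g) (i) :
    mkf g (g i) = g (flp i) := by
  have h : ∃ j, g j = g i := ⟨i, rfl⟩
  have h2 : h.choose = i := hg h.choose_spec
  rw [mkf, dif_pos h, h2]

theorem mkf_ev {m : ℕ} {g : Fin (2 * m) → ι} (hg : Function.Injective g) (p) :
    mkf g (g (evF p)) = g (odF p) := by rw [mkf_apply hg, flp_ev]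
theorem mkf_od {m : ℕ} {g : Fin (2 * m) → ι} (hg : Function.Injective g) (p) :
    mkf g (g (odF p)) = g (evF p) := by rw [mkf_apply hg, flp_od]

theorem mkf_not {m : ℕ} {g : Fin (2 * m) → ι} {x} (hx : ∀ i, g i ≠ x) :
    mkf g x = x := by
  rw [mkf, dif_neg]; rintro ⟨i, hi⟩; exact hx i hi

theorem mkf_mem {m : ℕ} {g : Fin (2 * m) → ι} (hg : Function.Injective g) {U : Finset ι}
    (hU : ∀ x, x ∈ U ↔ ∃ i, g i = x) : mkf g ∈ mtch U := by
  rw [mem_mtch]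
  constructor
  · intro a
    by_cases h : ∃ i, g i = a
    · obtain ⟨i, rfl⟩ := h
      rcases ev_od_cases i with ⟨p, rfl⟩ | ⟨p, rfl⟩
      · rw [mkf_ev hg, mkf_od hg]
      · rw [mkf_od hg, mkf_ev hg]
    · push Not at h
      rw [mkf_not h, mkf_not h]
  · intro a
    rw [hU]
    by_cases h : ∃ i, g i = a
    · refine iff_of_true ?_ h
      obtain ⟨i, rfl⟩ := h
      rcases ev_od_cases i with ⟨p, rfl⟩ | ⟨p, rfl⟩
      · rw [mkf_ev hg]; exact fun h => evF_ne_odF (hg h).symm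
      · rw [mkf_od hg]; exact fun h => evF_ne_odF (hg h)
    · refine iff_of_false ?_ h
      push Not at h
      simp [mkf_not h]

theorem mkf_lft {m : ℕ} {g : Fin (2 * m) → ι} (hg : Function.Injective g)
    (hlt : ∀ p, g (evF p) < g (odF p)) :
    lft (mkf g) = Finset.univ.image (fun p => g (evF p)) := by
  ext x
  simp only [mem_lft, Finset.mem_image, Finset.mem_univ, true_and]
  constructor
  · intro hx
    by_cases h : ∃ i, g i = x
    · obtain ⟨i, rfl⟩ := h
      rcases ev_od_cases i with ⟨p, rfl⟩ | ⟨p, rfl⟩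
      · exact ⟨p, rfl⟩
      · rw [mkf_od hg] at hx
        exact absurd hx (lt_asymm (hlt p))
    · push Not at h
      rw [mkf_not h] at hx
      exact absurd hx (lt_irrefl _)
  · rintro ⟨p, rfl⟩
    rw [mkf_ev hg]; exact hlt p
theorem pf_even {m : ℕ} (A : Matrix ι ι K) (e : Fin (2 * m) → ι) (he : StrictMono e)
    (U : Finset ι) (hU : ∀ x, x ∈ U ↔ ∃ i, e i = x) :
    pfaffian (A.submatrix e e) = ∑ f ∈ mtch U, csg K f * ∏ a ∈ lft f, A a (f a) := by
  classical
  rw [pfaffian, if_pos (even_two_mul m)]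
  have hval : ∀ σ : Equiv.Perm (Fin (2 * m)),
      ((∀ i j : Fin (2 * m), (i : ℕ) % 2 = 0 → (j : ℕ) = (i : ℕ) + 1 → σ i < σ j) ∧
        (∀ i j : Fin (2 * m), (i : ℕ) % 2 = 0 → (j : ℕ) % 2 = 0 → i < j → σ i < σ j)) ↔
      ((∀ p, σ (evF p) < σ (odF p)) ∧ ∀ p q : Fin m, p < q → σ (evF p) < σ (evF q)) := by
    intro σ
    constructor
    · rintro ⟨h1, h2⟩
      exact ⟨fun p => h1 _ _ (by simp [evF]) (by simp [evF, odF]),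
        fun p q h => h2 _ _ (by simp [evF]) (by simp [evF]) (evF_lt.2 h)⟩
    · rintro ⟨h1, h2⟩
      refine ⟨fun i j hi hj => ?_, fun i j hi hj hij => ?_⟩
      · have := j.2
        have a1 : i = evF ⟨i / 2, by omega⟩ := Fin.ext (by simp [evF]; omega)
        have a2 : j = odF ⟨i / 2, by omega⟩ := Fin.ext (by simp [odF]; omega)
        rw [a1, a2]; exact h1 _
      · have := j.2
        have := i.2
        have a1 : i = evF ⟨i / 2, by omega⟩ := Fin.ext (by simp [evF]; omega)
        have a2 : j = evF ⟨j / 2, by omega⟩ := Fin.ext (by simp [evF]; omega)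
        rw [a1, a2] at hij
        rw [a1, a2]; exact h2 _ _ (evF_lt.1 hij)
  have hginj : ∀ σ : Equiv.Perm (Fin (2 * m)), Function.Injective (fun i => e (σ i)) :=
    fun σ => he.injective.comp σ.injective
  have hgU : ∀ σ : Equiv.Perm (Fin (2 * m)), ∀ x, x ∈ U ↔ ∃ i, e (σ i) = x := by
    intro σ x
    rw [hU]
    exact ⟨fun ⟨i, hi⟩ => ⟨σ.symm i, by simpa using hi⟩, fun ⟨i, hi⟩ => ⟨_, hi⟩⟩
  refine Finset.sum_bij (fun σ _ => mkf (fun i => e (σ i))) ?_ ?_ ?_ ?_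
  · intro σ _
    exact mkf_mem (hginj σ) (hgU σ)
  · intro σ hσ τ hτ h
    rw [Finset.mem_filter, hval] at hσ hτ
    obtain ⟨-, s1, s2⟩ := hσ
    obtain ⟨-, t1, t2⟩ := hτ
    have l1 := mkf_lft (hginj σ) (fun p => he (s1 p))
    have l2 := mkf_lft (hginj τ) (fun p => he (t1 p))
    rw [h, l2] at l1
    have hev : (fun p => e (τ (evF p))) = (fun p => e (σ (evF p))) := by
      have m1 : StrictMono (fun p => e (τ (evF p))) := fun p q hpq => he (t2 p q hpq)
      have m2 : StrictMono (fun p => e (σ (evF p))) := fun p q hpq => he (s2 p q hpq)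
      rw [← StrictMono.range_inj m1 m2]
      have := congrArg (fun s : Finset ι => (s : Set ι)) l1
      simpa using this
    ext1 i
    apply he.injective
    rcases ev_od_cases i with ⟨p, rfl⟩ | ⟨p, rfl⟩
    · exact (congrFun hev p).symm
    · have a1 := mkf_ev (hginj σ) p
      have a2 := mkf_ev (hginj τ) p
      rw [← a1, ← a2, h]
      congr 1
      exact (congrFun hev p).symm
  · intro f hf
    have hcU : U.card = 2 * m := by
      have : U = Finset.univ.image e := by ext x; simp [hU]
      rw [this, Finset.card_image_of_injective _ he.injective]; simp
    have hc : (lft f).card = m := by have := mtch_card hf; omega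
    have hfi := mtch_inj hf
    obtain ⟨hun, hdis⟩ := mtch_union hf
    set a := (lft f).orderEmbOfFin hc with ha
    have hal : ∀ p, a p ∈ lft f := fun p => Finset.orderEmbOfFin_mem _ _ _
    have halt : ∀ p, a p < f (a p) := fun p => mem_lft.1 (hal p)
    have hf1 := (mem_mtch.1 hf).1
    have hf2 := (mem_mtch.1 hf).2
    have haU : ∀ p, ∃ i, e i = a p := fun p => (hU _).1 (by rw [hun]; exact Finset.mem_union_left _ (hal p))
    have hbU : ∀ p, ∃ i, e i = f (a p) := fun p => (hU _).1 (by
      rw [hun]; exact Finset.mem_union_right _ (Finset.mem_image_of_mem _ (hal p)))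
    choose x hx using haU
    choose y hy using hbU
    let s : Fin (2 * m) → Fin (2 * m) := fun i =>
      if (i : ℕ) % 2 = 0 then x ⟨i / 2, by omega⟩ else y ⟨i / 2, by omega⟩
    have sev : ∀ p, s (evF p) = x p := fun p => by simp [s, evF]
    have sod : ∀ p, s (odF p) = y p := fun p => by
      have : (2 * (p : ℕ) + 1) / 2 = p := by omega
      simp [s, odF, this]
    have hxy : ∀ p q, x p ≠ y q := by
      intro p q h
      have := congrArg e h
      rw [hx, hy] at this
      exact Finset.disjoint_left.1 hdis (hal p) (this ▸ Finset.mem_image_of_mem _ (hal q))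
    have sinj : Function.Injective s := by
      intro i j hij
      rcases ev_od_cases i with ⟨p, rfl⟩ | ⟨p, rfl⟩ <;>
        rcases ev_od_cases j with ⟨q, rfl⟩ | ⟨q, rfl⟩ <;> simp only [sev, sod] at hij
      · have := congrArg e hij
        rw [hx, hx] at this
        rw [a.injective this]
      · exact absurd hij (hxy _ _)
      · exact absurd hij.symm (hxy _ _)
      · have := congrArg e hij
        rw [hy, hy] at this
        rw [a.injective (hfi this)]
    let σ : Equiv.Perm (Fin (2 * m)) := Equiv.ofBijective s (Finite.injective_iff_bijective.1 sinj)
    have σev : ∀ p, e (σ (evF p)) = a p := fun p => by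
      rw [← hx, ← sev]; rfl
    have σod : ∀ p, e (σ (odF p)) = f (a p) := fun p => by
      rw [← hy, ← sod]; rfl
    refine ⟨σ, ?_, ?_⟩
    · rw [Finset.mem_filter, hval]
      refine ⟨Finset.mem_univ _, fun p => ?_, fun p q h => ?_⟩
      · rw [← he.lt_iff_lt, σev, σod]; exact halt p
      · rw [← he.lt_iff_lt, σev, σev]; exact a.strictMono h
    · funext z
      by_cases hz : ∃ i, e (σ i) = z
      · obtain ⟨i, rfl⟩ := hz
        rcases ev_od_cases i with ⟨p, rfl⟩ | ⟨p, rfl⟩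
        · rw [mkf_ev (hginj σ), σev, σod]
        · rw [mkf_od (hginj σ), σev, σod, hf1]
      · have hz' := hz
        rw [← hgU, ← hf2, not_not] at hz'
        push Not at hz
        rw [mkf_not hz, hz']
  · intro σ hσ
    rw [Finset.mem_filter, hval] at hσ
    obtain ⟨-, s1, s2⟩ := hσ
    have l1 := mkf_lft (hginj σ) (fun p => he (s1 p))
    have hmono : StrictMono (fun p => e (σ (evF p))) := fun p q hpq => he (s2 p q hpq)
    have hinj := hmono.injective
    have hev := mkf_ev (hginj σ)
    rw [csg, l1]
    simp_rw [Finset.prod_image fun a _ b _ h => hinj h]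
    congr 1
    · rw [aux_sign_prod, prod_ev_od]
      refine Finset.prod_congr rfl fun p _ => ?_
      rw [prod_ev_od, prod_ev_od, ← Finset.prod_mul_distrib]
      refine Finset.prod_congr rfl fun q _ => ?_
      simp only [hev, he.lt_iff_lt, evF_lt, odF_lt, evF_lt_odF, odF_lt_evF]
      rcases lt_trichotomy p q with h | h | h
      · have b1 := s1 p
        have b2 := s1 q
        have b3 := s2 p q h
        have b4 : σ (evF q) ≠ σ (odF p) := fun h => evF_ne_odF (σ.injective h)
        have b5 : σ (odF q) ≠ σ (odF p) := fun h' => h.ne' (odF_inj.1 (σ.injective h'))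
        simp only [h, h.le, true_and, b3, not_lt.2 b3.le, not_lt.2 (b3.trans b2).le, if_false]
        rcases lt_or_gt_of_ne b4 with c | c <;> rcases lt_or_gt_of_ne b5 with d | d <;>
          simp [c, d, not_lt.2 c.le, not_lt.2 d.le]
        exact absurd (d.trans c) (not_lt.2 b2.le)
      · subst h
        simp [not_lt.2 (s1 p).le]
      · simp [not_lt.2 h.le, not_le.2 h, not_lt.2 (s2 q p h).le]
    · rw [prod_ev_od]
      refine Finset.prod_congr rfl fun p _ => ?_
      have h1 : ((evF p : Fin (2 * m)) : ℕ) % 2 = 0 ∧ ((evF p : Fin (2 * m)) : ℕ) + 1 < 2 * m := by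
        simp [evF]; omega
      have h2 : ¬ (((odF p : Fin (2 * m)) : ℕ) % 2 = 0 ∧ ((odF p : Fin (2 * m)) : ℕ) + 1 < 2 * m) := by
        simp [odF]
      rw [dif_pos h1, dif_neg h2, mul_one, hev]
      rfl

theorem pf_all {n : ℕ} (A : Matrix ι ι K) (e : Fin n → ι) (he : StrictMono e)
    (U : Finset ι) (hU : ∀ x, x ∈ U ↔ ∃ i, e i = x) :
    pfaffian (A.submatrix e e) = ∑ f ∈ mtch U, csg K f * ∏ a ∈ lft f, A a (f a) := by
  by_cases hn : Even n
  · obtain ⟨m, hm⟩ := hn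
    obtain rfl : n = 2 * m := by omega
    exact pf_even A e he U hU
  · rw [pfaffian, if_neg hn]
    symm
    refine Finset.sum_eq_zero fun f hf => ?_
    exfalso
    have hcU : U.card = n := by
      have : U = Finset.univ.image e := by ext x; simp [hU]
      rw [this, Finset.card_image_of_injective _ he.injective]; simp
    exact hn (by rw [← hcU, mtch_card hf]; exact even_two_mul _)

theorem splitPerm_char {N : ℕ} (U : Finset (Fin N)) : ∃ c : U.card + Uᶜ.card = N,
    (∀ k : Fin U.card, splitPerm U (Fin.cast c (Fin.castAdd _ k)) = U.orderEmbOfFin rfl k) ∧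
    (∀ k : Fin Uᶜ.card, splitPerm U (Fin.cast c (Fin.natAdd _ k)) = Uᶜ.orderEmbOfFin rfl k) := by
  have c : U.card + Uᶜ.card = N := by rw [Finset.card_add_card_compl, Fintype.card_fin]
  refine ⟨c, fun k => ?_, fun k => ?_⟩
  · simp [splitPerm]
  · simp [splitPerm]

theorem splitPerm_sign {N : ℕ} (U : Finset (Fin N)) :
    ((Equiv.Perm.sign (splitPerm U) : ℤ) : K) =
      ∏ u ∈ U, ∏ v ∈ Uᶜ, if v < u then (-1 : K) else 1 := by
  have e1 : ∏ u ∈ U, ∏ v ∈ Uᶜ, (if v < u then (-1 : K) else 1) =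
      ∏ u, ∏ v, if v < u ∧ u ∈ U ∧ v ∉ U then (-1 : K) else 1 := by
    have hU : ∏ u ∈ U, ∏ v ∈ Uᶜ, (if v < u then (-1 : K) else 1) =
      ∏ u ∈ Finset.univ ∩ U, ∏ v ∈ Finset.univ ∩ Uᶜ, (if v < u then (-1 : K) else 1) := by simp
    rw [hU, ← Finset.prod_ite_mem]
    refine Finset.prod_congr rfl fun u _ => ?_
    by_cases hu : u ∈ U
    · rw [if_pos hu, ← Finset.prod_ite_mem]
      refine Finset.prod_congr rfl fun v _ => ?_
      by_cases hv : v ∈ U <;> simp [hu, hv]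
    · simp [hu]
  rw [e1, aux_sign_prod]
  refine Eq.trans ?_ (Equiv.prod_comp (splitPerm U)
    (fun u => ∏ v, if v < u ∧ u ∈ U ∧ v ∉ U then (-1 : K) else 1))
  refine Finset.prod_congr rfl fun i _ => ?_
  refine Eq.trans ?_ (Equiv.prod_comp (splitPerm U)
    (fun v => if v < splitPerm U i ∧ splitPerm U i ∈ U ∧ v ∉ U then (-1 : K) else 1))
  refine Finset.prod_congr rfl fun j _ => ?_
  congr 1
  apply propext
  obtain ⟨c, h1, h2⟩ := splitPerm_char U
  have cas : ∀ i : Fin N, (∃ k : Fin U.card, i = Fin.cast c (Fin.castAdd _ k)) ∨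
      (∃ k : Fin Uᶜ.card, i = Fin.cast c (Fin.natAdd _ k)) := by
    intro i
    by_cases h : (i : ℕ) < U.card
    · exact Or.inl ⟨⟨i, h⟩, Fin.ext rfl⟩
    · exact Or.inr ⟨⟨i - U.card, by omega⟩, Fin.ext (by simp; omega)⟩
  have m1 : ∀ k, U.orderEmbOfFin rfl k ∈ U := fun k => Finset.orderEmbOfFin_mem _ _ _
  have m2 : ∀ k, Uᶜ.orderEmbOfFin rfl k ∉ U := fun k =>
    Finset.mem_compl.1 (Finset.orderEmbOfFin_mem _ _ _)
  rcases cas i with ⟨k, rfl⟩ | ⟨k, rfl⟩ <;> rcases cas j with ⟨l, rfl⟩ | ⟨l, rfl⟩ <;>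
    simp only [h1, h2, m1, m2, Fin.lt_def, Fin.val_cast, Fin.val_castAdd, Fin.val_natAdd]
  · simp only [← Fin.lt_def, OrderEmbedding.lt_iff_lt]
    simp
    intro h; exact h.le
  · have : (k : ℕ) < U.card + l := by omega
    simp [this]
  · simp
    omega
  · simp only [← Fin.lt_def, OrderEmbedding.lt_iff_lt]
    simp
    intro h; exact h.le

theorem glue_facts {U : Finset ι} {f g : ι → ι} (hf : f ∈ mtch U) (hg : g ∈ mtch Uᶜ) :
    (∀ a ∈ U, f (g a) = f a) ∧ (∀ a, a ∉ U → f (g a) = g a) ∧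
    (∀ a ∈ U, f a ∈ U) ∧ (∀ a, a ∉ U → g a ∉ U) ∧ (∀ a, a ∉ U → f a = a) ∧
    (∀ a ∈ U, g a = a) := by
  obtain ⟨f1, f2⟩ := mem_mtch.1 hf
  obtain ⟨g1, g2⟩ := mem_mtch.1 hg
  have A1 : ∀ a, a ∉ U → f a = a := fun a ha => by
    rw [← f2, not_not] at ha; exact ha
  have A2 : ∀ a ∈ U, g a = a := fun a ha => by
    by_contra h
    exact Finset.mem_compl.1 ((g2 a).1 h) ha
  have A3 : ∀ a, a ∉ U → g a ∉ U := fun a ha => by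
    rw [← Finset.mem_compl, ← g2, g1]
    exact ((g2 a).2 (Finset.mem_compl.2 ha)).symm
  refine ⟨fun a ha => by rw [A2 a ha], fun a ha => A1 _ (A3 a ha), fun a ha => ?_, A3, A1, A2⟩
  rw [← f2, f1]
  exact ((f2 a).2 ha).symm

theorem lft_sub {U : Finset ι} {f : ι → ι} (hf : f ∈ mtch U) {a} (ha : a ∈ lft f) : a ∈ U := by
  rw [← (mem_mtch.1 hf).2]; exact (mem_lft.1 ha).ne'

theorem glue_lft {U : Finset ι} {f g : ι → ι} (hf : f ∈ mtch U) (hg : g ∈ mtch Uᶜ) :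
    lft (fun a => f (g a)) = lft f ∪ lft g ∧ Disjoint (lft f) (lft g) := by
  obtain ⟨c1, c2, c3, c4, c5, c6⟩ := glue_facts hf hg
  constructor
  · ext a
    rw [Finset.mem_union, mem_lft, mem_lft, mem_lft]
    by_cases ha : a ∈ U
    · simp [c6 a ha]
    · simp [c2 a ha, c5 a ha]
  · rw [Finset.disjoint_left]
    intro a h1 h2
    exact Finset.mem_compl.1 (lft_sub hg h2) (lft_sub hf h1)

theorem glue_mem {U : Finset ι} {f g : ι → ι} (hf : f ∈ mtch U) (hg : g ∈ mtch Uᶜ) :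
    (fun a => f (g a)) ∈ mtch Finset.univ := by
  obtain ⟨c1, c2, c3, c4, c5, c6⟩ := glue_facts hf hg
  obtain ⟨f1, f2⟩ := mem_mtch.1 hf
  obtain ⟨g1, g2⟩ := mem_mtch.1 hg
  rw [mem_mtch]
  refine ⟨fun a => ?_, fun a => iff_of_true ?_ (Finset.mem_univ _)⟩
  · by_cases ha : a ∈ U
    · rw [c1 a ha, c1 _ (c3 a ha), f1]
    · rw [c2 a ha, c2 _ (c4 a ha), g1]
  · by_cases ha : a ∈ U
    · rw [c1 a ha]; exact (f2 a).2 ha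
    · rw [c2 a ha]; exact (g2 a).2 (Finset.mem_compl.2 ha)

theorem glue_csg {U : Finset ι} {f g : ι → ι} (hf : f ∈ mtch U) (hg : g ∈ mtch Uᶜ) :
    csg K (fun a => f (g a)) =
      (∏ u ∈ U, ∏ v ∈ Uᶜ, if v < u then (-1 : K) else 1) * csg K f * csg K g := by
  obtain ⟨c1, c2, c3, c4, c5, c6⟩ := glue_facts hf hg
  obtain ⟨l1, l2⟩ := glue_lft hf hg
  have F : ∀ a ∈ lft f, f (g a) = f a := fun a ha => c1 a (lft_sub hf ha)
  have G : ∀ a ∈ lft g, f (g a) = g a := fun a ha => c2 a (Finset.mem_compl.1 (lft_sub hg ha))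
  have hsg : (∏ u ∈ U, ∏ v ∈ Uᶜ, if v < u then (-1 : K) else 1) =
      (∏ a ∈ lft f, ∏ c ∈ lft g, if a < c ∧ c < f a ∧ f a < g c then (-1 : K) else 1) *
      (∏ a ∈ lft g, ∏ c ∈ lft f, if a < c ∧ c < g a ∧ g a < f c then (-1 : K) else 1) := by
    rw [mtch_prod hf]
    simp_rw [mtch_prod hg]
    rw [Finset.prod_comm (s := lft g), ← Finset.prod_mul_distrib]
    refine Finset.prod_congr rfl fun a ha => ?_
    rw [← Finset.prod_mul_distrib, ← Finset.prod_mul_distrib]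
    refine Finset.prod_congr rfl fun c hc => ?_
    have aU := lft_sub hf ha
    have cU := Finset.mem_compl.1 (lft_sub hg hc)
    have faU := c3 a aU
    have gcU := c4 c cU
    rw [mem_lft] at ha hc
    have n1 : a ≠ c := fun h => cU (h ▸ aU)
    have n2 : a ≠ g c := fun h => gcU (h ▸ aU)
    have n3 : f a ≠ c := fun h => cU (h ▸ faU)
    have n4 : f a ≠ g c := fun h => gcU (h ▸ faU)
    rcases lt_or_gt_of_ne n1 with h1 | h1 <;> rcases lt_or_gt_of_ne n2 with h2 | h2 <;>
    rcases lt_or_gt_of_ne n3 with h3 | h3 <;> rcases lt_or_gt_of_ne n4 with h4 | h4 <;>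
    simp only [h1, h2, h3, h4, not_lt.2 h1.le, not_lt.2 h2.le, not_lt.2 h3.le, not_lt.2 h4.le,
      if_true, if_false, and_true, and_false, true_and, false_and, and_self] <;>
    first
    | (norm_num; done)
    | (exfalso; order)
  rw [hsg, csg, csg, csg, l1, Finset.prod_union l2]
  simp_rw [Finset.prod_union l2]
  rw [Finset.prod_mul_distrib, Finset.prod_mul_distrib]
  have E1 : (∏ a ∈ lft f, ∏ c ∈ lft f,
      if a < c ∧ c < f (g a) ∧ f (g a) < f (g c) then (-1 : K) else 1) =
      ∏ a ∈ lft f, ∏ c ∈ lft f, if a < c ∧ c < f a ∧ f a < f c then (-1 : K) else 1 :=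
    Finset.prod_congr rfl fun a ha => Finset.prod_congr rfl fun c hc => by rw [F a ha, F c hc]
  have E2 : (∏ a ∈ lft f, ∏ c ∈ lft g,
      if a < c ∧ c < f (g a) ∧ f (g a) < f (g c) then (-1 : K) else 1) =
      ∏ a ∈ lft f, ∏ c ∈ lft g, if a < c ∧ c < f a ∧ f a < g c then (-1 : K) else 1 :=
    Finset.prod_congr rfl fun a ha => Finset.prod_congr rfl fun c hc => by rw [F a ha, G c hc]
  have E3 : (∏ a ∈ lft g, ∏ c ∈ lft f,
      if a < c ∧ c < f (g a) ∧ f (g a) < f (g c) then (-1 : K) else 1) =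
      ∏ a ∈ lft g, ∏ c ∈ lft f, if a < c ∧ c < g a ∧ g a < f c then (-1 : K) else 1 :=
    Finset.prod_congr rfl fun a ha => Finset.prod_congr rfl fun c hc => by rw [G a ha, F c hc]
  have E4 : (∏ a ∈ lft g, ∏ c ∈ lft g,
      if a < c ∧ c < f (g a) ∧ f (g a) < f (g c) then (-1 : K) else 1) =
      ∏ a ∈ lft g, ∏ c ∈ lft g, if a < c ∧ c < g a ∧ g a < g c then (-1 : K) else 1 :=
    Finset.prod_congr rfl fun a ha => Finset.prod_congr rfl fun c hc => by rw [G a ha, G c hc]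
  rw [E1, E2, E3, E4]
  ring

/-- restriction of `f` to `U`, identity elsewhere -/
def rst (U : Finset ι) (f : ι → ι) (a : ι) : ι := if a ∈ U then f a else a

theorem rst_mem {U : Finset ι} {f : ι → ι} (hf : f ∈ mtch Finset.univ)
    (hU : ∀ a ∈ U, f a ∈ U) : rst U f ∈ mtch U := by
  obtain ⟨f1, f2⟩ := mem_mtch.1 hf
  rw [mem_mtch]
  refine ⟨fun a => ?_, fun a => ?_⟩
  · by_cases ha : a ∈ U
    · simp [rst, ha, hU a ha, f1]
    · simp [rst, ha]
  · by_cases ha : a ∈ U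
    · simpa [rst, ha] using f2 a
    · simp [rst, ha]

theorem main_sum (A₁ A₂ : Matrix ι ι K) :
    ∑ f ∈ mtch (Finset.univ : Finset ι), csg K f * ∏ a ∈ lft f, (A₁ + A₂) a (f a) =
    ∑ U : Finset ι, (∏ u ∈ U, ∏ v ∈ Uᶜ, if v < u then (-1 : K) else 1) *
      (∑ f ∈ mtch U, csg K f * ∏ a ∈ lft f, A₁ a (f a)) *
      (∑ g ∈ mtch Uᶜ, csg K g * ∏ a ∈ lft g, A₂ a (g a)) := by
  have hL : ∀ f ∈ mtch (Finset.univ : Finset ι),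
      csg K f * ∏ a ∈ lft f, (A₁ + A₂) a (f a) =
      ∑ t ∈ (lft f).powerset,
        csg K f * ((∏ a ∈ t, A₁ a (f a)) * ∏ a ∈ lft f \ t, A₂ a (f a)) := by
    intro f _
    rw [← Finset.mul_sum, ← Finset.prod_add]
    rfl
  rw [Finset.sum_congr rfl hL]
  have hR : ∀ (c : K) (s t : Finset (ι → ι)) (F G : (ι → ι) → K),
      c * (∑ f ∈ s, F f) * (∑ g ∈ t, G g) = ∑ f ∈ s, ∑ g ∈ t, c * F f * G g := by
    intro c s t F G
    rw [Finset.mul_sum s, Finset.sum_mul]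
    exact Finset.sum_congr rfl fun f _ => Finset.mul_sum _ _ _
  simp_rw [hR]
  simp_rw [Finset.sum_sigma']
  symm
  have hinv : ∀ f ∈ mtch (Finset.univ : Finset ι), ∀ t ⊆ lft f,
      (∀ a ∈ t ∪ t.image f, f a ∈ t ∪ t.image f) ∧
      (∀ a ∈ (t ∪ t.image f)ᶜ, f a ∈ (t ∪ t.image f)ᶜ) := by
    intro f hf t ht
    have f1 := (mem_mtch.1 hf).1
    have h : ∀ a ∈ t ∪ t.image f, f a ∈ t ∪ t.image f := by
      intro a ha
      rcases Finset.mem_union.1 ha with ha | ha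
      · exact Finset.mem_union_right _ (Finset.mem_image_of_mem _ ha)
      · obtain ⟨b, hb, rfl⟩ := Finset.mem_image.1 ha
        rw [f1]; exact Finset.mem_union_left _ hb
    refine ⟨h, fun a ha => ?_⟩
    rw [Finset.mem_compl] at ha ⊢
    intro h'
    have := h _ h'
    rw [f1] at this
    exact ha this
  have hlr : ∀ f ∈ mtch (Finset.univ : Finset ι), ∀ t ⊆ lft f,
      lft (rst (t ∪ t.image f) f) = t := by
    intro f hf t ht
    have f1 := (mem_mtch.1 hf).1
    ext a
    rw [mem_lft, rst]
    by_cases ha : a ∈ t ∪ t.image f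
    · rw [if_pos ha]
      constructor
      · intro h
        rcases Finset.mem_union.1 ha with ha | ha
        · exact ha
        · obtain ⟨b, hb, rfl⟩ := Finset.mem_image.1 ha
          have := mem_lft.1 (ht hb)
          rw [f1] at h
          exact absurd h (lt_asymm this)
      · intro h; exact mem_lft.1 (ht h)
    · rw [if_neg ha]
      exact iff_of_false (lt_irrefl _) (fun h => ha (Finset.mem_union_left _ h))
  have hrr : ∀ (V : Finset ι) (f : ι → ι), (∀ a ∈ Vᶜ, f a ∈ Vᶜ) →
      (fun a => rst V f (rst Vᶜ f a)) = f := by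
    intro V f h
    funext a
    by_cases ha : a ∈ V
    · simp [rst, ha]
    · have := Finset.mem_compl.1 (h a (Finset.mem_compl.2 ha))
      simp [rst, ha, this]
  refine Finset.sum_bij'
    (fun x _ => ⟨fun a => x.2.1 (x.2.2 a), lft x.2.1⟩)
    (fun y _ => ⟨y.2 ∪ y.2.image y.1, rst (y.2 ∪ y.2.image y.1) y.1,
      rst (y.2 ∪ y.2.image y.1)ᶜ y.1⟩) ?_ ?_ ?_ ?_ ?_
  · rintro ⟨U, f, g⟩ hx
    simp only [Finset.mem_sigma, Finset.mem_univ, true_and] at hx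
    obtain ⟨hf, hg⟩ := hx
    simp only [Finset.mem_sigma, Finset.mem_powerset]
    exact ⟨glue_mem hf hg, by rw [(glue_lft hf hg).1]; exact Finset.subset_union_left⟩
  · rintro ⟨f, t⟩ hy
    simp only [Finset.mem_sigma, Finset.mem_powerset] at hy
    obtain ⟨hf, ht⟩ := hy
    simp only [Finset.mem_sigma, Finset.mem_univ, true_and]
    exact ⟨rst_mem hf (hinv f hf t ht).1, rst_mem hf (hinv f hf t ht).2⟩
  · rintro ⟨U, f, g⟩ hx
    simp only [Finset.mem_sigma, Finset.mem_univ, true_and] at hx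
    obtain ⟨hf, hg⟩ := hx
    obtain ⟨c1, c2, c3, c4, c5, c6⟩ := glue_facts hf hg
    have hU : lft f ∪ (lft f).image (fun a => f (g a)) = U := by
      rw [(mtch_union hf).1]
      congr 1
      exact Finset.image_congr fun a ha => c1 a (lft_sub hf ha)
    have r1 : rst U (fun a => f (g a)) = f := by
      funext a
      by_cases ha : a ∈ U
      · simp [rst, ha, c6 a ha]
      · simp [rst, ha, c5 a ha]
    have r2 : rst Uᶜ (fun a => f (g a)) = g := by
      funext a
      by_cases ha : a ∈ U
      · simp [rst, ha, c6 a ha]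
      · simp [rst, ha, c2 a ha]
    simp only [hU, r1, r2]
  · rintro ⟨f, t⟩ hy
    simp only [Finset.mem_sigma, Finset.mem_powerset] at hy
    obtain ⟨hf, ht⟩ := hy
    simp only [hlr f hf t ht, hrr _ f (hinv f hf t ht).2]
  · rintro ⟨U, f, g⟩ hx
    simp only [Finset.mem_sigma, Finset.mem_univ, true_and] at hx
    obtain ⟨hf, hg⟩ := hx
    obtain ⟨c1, c2, c3, c4, c5, c6⟩ := glue_facts hf hg
    obtain ⟨l1, l2⟩ := glue_lft hf hg
    simp only
    rw [glue_csg hf hg, l1, Finset.union_sdiff_cancel_left l2]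
    have E1 : ∏ a ∈ lft f, A₁ a (f (g a)) = ∏ a ∈ lft f, A₁ a (f a) :=
      Finset.prod_congr rfl fun a ha => by rw [c1 a (lft_sub hf ha)]
    have E2 : ∏ a ∈ lft g, A₂ a (f (g a)) = ∏ a ∈ lft g, A₂ a (g a) :=
      Finset.prod_congr rfl fun a ha => by
        rw [c2 a (Finset.mem_compl.1 (lft_sub hg ha))]
    rw [E1, E2]
    ring

theorem pfSub_eq (A : Matrix ι ι K) (U : Finset ι) :
    pfSub A U = ∑ f ∈ mtch U, csg K f * ∏ a ∈ lft f, A a (f a) := by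
  refine pf_all A (fun i : Fin U.card => ((U.orderIsoOfFin rfl) i : ι)) ?_ U ?_
  · intro i j h
    exact (U.orderIsoOfFin rfl).strictMono h
  · intro x
    constructor
    · intro hx
      exact ⟨(U.orderIsoOfFin rfl).symm ⟨x, hx⟩, by simp⟩
    · rintro ⟨i, rfl⟩
      exact Subtype.prop _

end Helpers

/-- Pfaffian of a sum of two skew-symmetric matrices:
`Pf (A₁ + A₂) = Σ_U σ_U · Pf A₁[U] · Pf A₂[V ∖ U]`. -/
theorem pfaffian_add {N : ℕ} {K : Type*} [Field K] (hN : Even N)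
    (A₁ A₂ : Matrix (Fin N) (Fin N) K)
    (h₁ : A₁ᵀ = -A₁) (h₁d : ∀ i, A₁ i i = 0)
    (h₂ : A₂ᵀ = -A₂) (h₂d : ∀ i, A₂ i i = 0) :
    pfaffian (A₁ + A₂) =
      ∑ U : Finset (Fin N),
        ((Equiv.Perm.sign (splitPerm U) : ℤ) : K) * pfSub A₁ U * pfSub A₂ Uᶜ := by
  have h := pf_all (A₁ + A₂) (fun i : Fin N => i) strictMono_id Finset.univ (by simp)
  have h' : (A₁ + A₂).submatrix (fun i : Fin N => i) (fun i : Fin N => i) = A₁ + A₂ := rfl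
  rw [h'] at h
  rw [h, main_sum]
  refine Finset.sum_congr rfl fun U _ => ?_
  rw [splitPerm_sign, pfSub_eq, pfSub_eq]
end
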